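/- Generalized HJW theorem (finite case): Let B be a unital C*-subalgebra of B(H), let x be a unit vector in H, and let μ be a regular Borel probability measure on the state space K of B whose barycenter is ω_x|_B. If the commutant B' is finite-dimensional as a complex vector space, then there exists a CP instrument ℰ on B(H) over (K, Σ) that is local to B' and satisfies ⟨x, ℰ[S](B) x⟩ = ∫_S ω(B) dμ(ω) for all S ∈ Σ and all B ∈ B. -/

import Mathlib

open scoped InnerProductSpace ComplexOrder
open MeasureTheory

noncomputable section

variable {H : Type*} [NormedAddCommGroup H] [InnerProductSpace ℂ H] [CompleteSpace H]

/-- Positivity of an `n × n` matrix of operators on `H`, expressed as positivity of the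
corresponding operator on the `n`-fold Hilbert sum `H^n`. -/
def OpMatrixNonneg {n : ℕ} (M : Matrix (Fin n) (Fin n) (H →L[ℂ] H)) : Prop :=
  ∀ v : Fin n → H, 0 ≤ ∑ i, ∑ j, ⟪v i, M i j (v j)⟫_ℂ

/-- A map `Φ : B(H) → B(H)` is completely positive if it is (complex) linear and its
entrywise application to positive matrices over `B(H)` preserves positivity. -/
def IsCompletelyPositiveMap (Φ : (H →L[ℂ] H) → (H →L[ℂ] H)) : Prop :=
  IsLinearMap ℂ Φ ∧ ∀ (n : ℕ) (M : Matrix (Fin n) (Fin n) (H →L[ℂ] H)),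
    OpMatrixNonneg M → OpMatrixNonneg (M.map Φ)

/-- A state on a (C*-)subalgebra `B ⊆ B(H)`: a positive linear functional `ω` with
`ω(I) = 1`, regarded as an element of the weak-* dual of `B`. -/
def IsStateOn (B : StarSubalgebra ℂ (H →L[ℂ] H)) (ω : WeakDual ℂ B) : Prop :=
  (∀ b : B, 0 ≤ (b : H →L[ℂ] H) → 0 ≤ ω b) ∧ ω 1 = 1

/-- The state space `K` of `B`, equipped with the weak-* topology. -/
abbrev StateSpace (B : StarSubalgebra ℂ (H →L[ℂ] H)) : Type _ :=
  {ω : WeakDual ℂ B // IsStateOn B ω}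

/-- The Borel σ-algebra `Σ` of the state space `K`. -/
instance (B : StarSubalgebra ℂ (H →L[ℂ] H)) : MeasurableSpace (StateSpace B) := borel _

instance (B : StarSubalgebra ℂ (H →L[ℂ] H)) : BorelSpace (StateSpace B) := ⟨rfl⟩

/-- A completely positive instrument on `B(H)` over `(X, Σ)`: for fixed `B` it is countably
additive in the weak operator topology, and for fixed `S ∈ Σ` it is a completely positive
map with `ℰ[S](I) ≤ I`. -/
def IsCPInstrument {X : Type*} [MeasurableSpace X]
    (ℰ : Set X → (H →L[ℂ] H) → (H →L[ℂ] H)) : Prop :=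
  (∀ B : H →L[ℂ] H, ∀ f : ℕ → Set X, (∀ n, MeasurableSet (f n)) →
      Pairwise (Function.onFun Disjoint f) →
      ∀ y z : H, HasSum (fun n => ⟪y, ℰ (f n) B z⟫_ℂ) ⟪y, ℰ (⋃ n, f n) B z⟫_ℂ) ∧
  ∀ S : Set X, MeasurableSet S → IsCompletelyPositiveMap (ℰ S) ∧ ℰ S 1 ≤ 1

/-- An instrument is local to an algebra `A ⊆ B(H)` if `ℰ[S](B) = ℰ[S](I)·B` for all `B`
in the commutant `A'` and all `S ∈ Σ`. -/
def InstrumentLocalTo {X : Type*} [MeasurableSpace X]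
    (ℰ : Set X → (H →L[ℂ] H) → (H →L[ℂ] H)) (A : Set (H →L[ℂ] H)) : Prop :=
  ∀ S : Set X, MeasurableSet S → ∀ B ∈ Set.centralizer A, ℰ S B = ℰ S 1 * B

/-!
A measure with barycenter `ω_x` has an operator valued Radon–Nikodym derivative: the functional
`b ↦ ∫_S ω(b) dμ(ω)` is positive and dominated by `ω_x`, so
`⟪a x, T_S (b x)⟫ = ∫_S ω(a⋆ b) dμ(ω)` defines an operator `0 ≤ T_S ≤ 1` on the closure of `B x`.
Uniqueness of `T_S` puts it into `B'` and makes `S ↦ T_S` countably additive.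

If `B'` is finite-dimensional, its unitary group is compact, and the Haar average
`E(A) = ∫ u A u⋆ du` over that group is a completely positive projection onto `B''`. Since
`T_S ∈ B'` commutes with `E(A) ∈ B''`, the map `ℰ[S](A) = T_S E(A) = T_S^{1/2} E(A) T_S^{1/2}` is
completely positive, and it multiplies the elements of `B''` by `T_S`.
-/

open Filter Topology

universe u

section PosSemidefForm

open scoped ComplexConjugate

-- Symmetry comes from polarization: the form is real at `v + w` and at `v + i w`.
lemma isPosSemidef_of_isNonneg {V : Type*} [AddCommGroup V] [Module ℂ V]
    {s : V →ₗ⋆[ℂ] V →ₗ[ℂ] ℂ} (hs : s.IsNonneg) : s.IsPosSemidef where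
  nonneg := hs.nonneg
  eq v w := by
    have hreal (u : V) : (s u u).im = 0 := (Complex.nonneg_iff.1 (hs.nonneg u)).2.symm
    have him := hreal (v + w)
    have hre := hreal (v + Complex.I • w)
    simp only [map_add, LinearMap.map_smulₛₗ, LinearMap.add_apply, LinearMap.smul_apply, map_smul,
      smul_eq_mul, Complex.conj_I, Complex.add_im, Complex.add_re, Complex.mul_im, Complex.mul_re,
      Complex.neg_re, Complex.neg_im, Complex.I_re, Complex.I_im, hreal] at him hre
    apply Complex.ext <;> simp only [Complex.conj_re, Complex.conj_im] <;> linarith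

variable {𝕜 : Type*} {V : Type u} [RCLike 𝕜] [AddCommGroup V] [Module 𝕜 V]
  {s : V →ₗ⋆[𝕜] V →ₗ[𝕜] 𝕜}

/-- The pre-inner-product structure given by a positive semidefinite sesquilinear form. It gives
access to the Cauchy–Schwarz inequality and to the Hilbert space completion. -/
abbrev preInnerCore (hs : s.IsPosSemidef) : PreInnerProductSpace.Core 𝕜 V where
  inner v w := s v w
  conj_inner_symm v w := hs.eq w v
  re_inner_nonneg v := (RCLike.nonneg_iff.1 (hs.nonneg v)).1
  add_left u v w := by simp
  smul_left v w c := by simp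

lemma norm_apply_sq_le_of_isPosSemidef (hs : s.IsPosSemidef) (v w : V) :
    ‖s v w‖ ^ 2 ≤ RCLike.re (s v v) * RCLike.re (s w w) := by
  have cauchy_schwarz := InnerProductSpace.Core.inner_mul_inner_self_le (c := preInnerCore hs) v w
  have norm_symm : ‖s w v‖ = ‖s v w‖ := by rw [← hs.eq v w, RCLike.norm_conj]
  calc ‖s v w‖ ^ 2 = ‖s v w‖ * ‖s w v‖ := by rw [norm_symm, sq]
    _ ≤ _ := cauchy_schwarz

lemma exists_inner_eq_of_isPosSemidef (hs : s.IsPosSemidef) :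
    ∃ (G : Type u) (_ : NormedAddCommGroup G) (_ : InnerProductSpace 𝕜 G) (_ : CompleteSpace G)
      (g : V →ₗ[𝕜] G), ∀ v w, ⟪g v, g w⟫_𝕜 = s v w := by
  let : SeminormedAddCommGroup V :=
    InnerProductSpace.Core.toSeminormedAddCommGroup (c := preInnerCore hs)
  let : InnerProductSpace 𝕜 V := InnerProductSpace.ofCore (preInnerCore hs)
  exact ⟨UniformSpace.Completion V, inferInstance, inferInstance, inferInstance,
    UniformSpace.Completion.toComplL.toLinearMap, UniformSpace.Completion.inner_coe⟩

end PosSemidefForm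

section RepresentsForm

variable {𝕜 E V ι : Type*} [RCLike 𝕜] [NormedAddCommGroup E] [InnerProductSpace 𝕜 E]
  {l : Filter ι} {C : ℝ}

lemma tendsto_inner_of_mem_closure {w : ι → E} {w₀ : E} (hw : ∀ i, ‖w i‖ ≤ C) {s : Set E}
    (h : ∀ y ∈ s, Tendsto (fun i => ⟪y, w i⟫_𝕜) l (𝓝 ⟪y, w₀⟫_𝕜)) {y : E} (hy : y ∈ closure s) :
    Tendsto (fun i => ⟪y, w i⟫_𝕜) l (𝓝 ⟪y, w₀⟫_𝕜) := by
  have hlip (i : ι) : LipschitzWith C.toNNReal fun y => ⟪y, w i⟫_𝕜 :=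
    LipschitzWith.of_dist_le_mul fun y z => by
      rw [dist_eq_norm, ← inner_sub_left, dist_eq_norm, mul_comm]
      exact (norm_inner_le_norm _ _).trans (by gcongr; exact (hw i).trans C.le_coe_toNNReal)
  have hclosed : IsClosed {y | Tendsto (fun i => ⟪y, w i⟫_𝕜) l (𝓝 ⟪y, w₀⟫_𝕜)} :=
    (LipschitzWith.uniformEquicontinuous _ _ hlip).equicontinuous.isClosed_setOfPred_tendsto
      (by fun_prop)
  exact closure_minimal h hclosed hy

variable [CompleteSpace E]

lemma tendsto_inner_apply_of_mem_closure {T : ι → E →L[𝕜] E} {T₀ : E →L[𝕜] E}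
    (hT : ∀ i, ‖T i‖ ≤ C) {s : Set E}
    (h : ∀ y ∈ s, ∀ z ∈ s, Tendsto (fun i => ⟪y, T i z⟫_𝕜) l (𝓝 ⟪y, T₀ z⟫_𝕜)) {y z : E}
    (hy : y ∈ closure s) (hz : z ∈ closure s) :
    Tendsto (fun i => ⟪y, T i z⟫_𝕜) l (𝓝 ⟪y, T₀ z⟫_𝕜) := by
  have star_inner (A : E →L[𝕜] E) (y z : E) : star ⟪y, A z⟫_𝕜 = ⟪z, A.adjoint y⟫_𝕜 := by
    rw [← A.adjoint_inner_left]
    exact inner_conj_symm _ _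
  have hTz (i : ι) : ‖T i z‖ ≤ C * ‖z‖ := (T i).le_of_opNorm_le (hT i) z
  have hTy (i : ι) (y : E) : ‖(T i).adjoint y‖ ≤ C * ‖y‖ :=
    (T i).adjoint.le_of_opNorm_le ((LinearIsometryEquiv.norm_map _ _).trans_le (hT i)) y
  refine tendsto_inner_of_mem_closure hTz (fun y hy => ?_) hy
  have tendsto_adjoint : Tendsto (fun i => ⟪z, (T i).adjoint y⟫_𝕜) l (𝓝 ⟪z, T₀.adjoint y⟫_𝕜) :=
    tendsto_inner_of_mem_closure (hTy · y)
      (fun z hz => by simpa only [star_inner] using (h y hy z hz).star) hz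
  simpa only [star_inner, ContinuousLinearMap.adjoint_adjoint] using tendsto_adjoint.star

variable [AddCommGroup V] [Module 𝕜 V] {e : V →ₗ[𝕜] E}

/-- The orthogonal projection onto the closure of the range of `e`. -/
abbrev closedRangeProjection (e : V →ₗ[𝕜] E) : E →L[𝕜] E :=
  (LinearMap.range e).topologicalClosure.starProjection

lemma commute_starProjection {K : Submodule 𝕜 E} [K.HasOrthogonalProjection] {U : E →L[𝕜] E}
    (hU : K ∈ Module.End.invtSubmodule U.toLinearMap)
    (hU' : K ∈ Module.End.invtSubmodule U.adjoint.toLinearMap) : Commute K.starProjection U := by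
  rw [ContinuousLinearMap.IsIdempotentElem.commute_iff K.isIdempotentElem_starProjection,
    K.range_starProjection, K.ker_starProjection]
  exact ⟨hU, ContinuousLinearMap.mem_invtSubmodule_adjoint_iff.1 hU'⟩

lemma commute_closedRangeProjection {U : E →L[𝕜] E} {u u' : V → V}
    (hU : ∀ v, U (e v) = e (u v)) (hU' : ∀ v, U.adjoint (e v) = e (u' v)) :
    Commute (closedRangeProjection e) U := by
  have invariant {A : E →L[𝕜] E} {a : V → V} (hA : ∀ v, A (e v) = e (a v)) :
      (LinearMap.range e).topologicalClosure ∈ Module.End.invtSubmodule A.toLinearMap := by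
    have mapsTo_range : Set.MapsTo A (LinearMap.range e) (LinearMap.range e) := by
      rintro _ ⟨v, rfl⟩
      exact ⟨a v, (hA v).symm⟩
    exact (Module.End.mem_invtSubmodule_iff_forall_mem_of_mem _).2
      (mapsTo_range.closure A.continuous)
  exact commute_starProjection (invariant hU) (invariant hU')

/-- The operator `T` represents the sesquilinear form `s` along `e : V → E`, that is
`⟪e v, T (e w)⟫_𝕜 = s v w`. Such a `T` is only determined on the closure of the range of `e`;
asking it to be compressed to that subspace makes it unique. -/
structure RepresentsForm (e : V →ₗ[𝕜] E) (s : V →ₗ⋆[𝕜] V →ₗ[𝕜] 𝕜) (T : E →L[𝕜] E) : Prop where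
  inner_apply : ∀ v w, ⟪e v, T (e w)⟫_𝕜 = s v w
  compression : closedRangeProjection e * T * closedRangeProjection e = T

namespace RepresentsForm

variable {s s₀ : V →ₗ⋆[𝕜] V →ₗ[𝕜] 𝕜} {T T₀ : E →L[𝕜] E}

lemma inner_eq (h : RepresentsForm e s T) (y z : E) :
    ⟪y, T z⟫_𝕜 = ⟪closedRangeProjection e y, T (closedRangeProjection e z)⟫_𝕜 := by
  conv_lhs => rw [← h.compression]
  exact (Submodule.inner_starProjection_left_eq_right _ _ _).symm

lemma tendsto_inner {s : ι → V →ₗ⋆[𝕜] V →ₗ[𝕜] 𝕜} {T : ι → E →L[𝕜] E}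
    (h : ∀ i, RepresentsForm e (s i) (T i)) (h₀ : RepresentsForm e s₀ T₀) (hT : ∀ i, ‖T i‖ ≤ C)
    (hs : ∀ v w, Tendsto (fun i => s i v w) l (𝓝 (s₀ v w))) (y z : E) :
    Tendsto (fun i => ⟪y, T i z⟫_𝕜) l (𝓝 ⟪y, T₀ z⟫_𝕜) := by
  have mem_closure (z : E) : closedRangeProjection e z ∈ closure (LinearMap.range e : Set E) :=
    Submodule.starProjection_apply_mem (LinearMap.range e).topologicalClosure z
  rw [h₀.inner_eq]
  refine (tendsto_inner_apply_of_mem_closure hT ?_ (mem_closure y) (mem_closure z)).congr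
    fun i => ((h i).inner_eq y z).symm
  rintro _ ⟨v, rfl⟩ _ ⟨w, rfl⟩
  simpa only [(h _).inner_apply, h₀.inner_apply] using hs v w

lemma unique (h : RepresentsForm e s T) (h₀ : RepresentsForm e s T₀) : T = T₀ := by
  ext z
  refine ext_inner_left 𝕜 fun y => ?_
  exact tendsto_nhds_unique (tendsto_const_nhds (f := (atTop : Filter ℕ)))
    (tendsto_inner (fun _ => h) h₀ (fun _ => le_rfl) (fun _ _ => tendsto_const_nhds) y z)

lemma sum {s : ι → V →ₗ⋆[𝕜] V →ₗ[𝕜] 𝕜} {T : ι → E →L[𝕜] E} (F : Finset ι)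
    (h : ∀ i ∈ F, RepresentsForm e (s i) (T i)) :
    RepresentsForm e (∑ i ∈ F, s i) (∑ i ∈ F, T i) where
  inner_apply v w := by
    simp only [sum_apply, inner_sum, LinearMap.sum_apply]
    exact Finset.sum_congr rfl fun i hi => (h i hi).inner_apply v w
  compression := by
    rw [Finset.mul_sum, Finset.sum_mul]
    exact Finset.sum_congr rfl fun i hi => (h i hi).compression

lemma hasSum_inner {s : ι → V →ₗ⋆[𝕜] V →ₗ[𝕜] 𝕜} {T : ι → E →L[𝕜] E}
    (h : ∀ i, RepresentsForm e (s i) (T i)) (h₀ : RepresentsForm e s₀ T₀)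
    (hT : ∀ F : Finset ι, ‖∑ i ∈ F, T i‖ ≤ C) (hs : ∀ v w, HasSum (fun i => s i v w) (s₀ v w))
    (y z : E) : HasSum (fun i => ⟪y, T i z⟫_𝕜) ⟪y, T₀ z⟫_𝕜 := by
  have tendsto_sum := tendsto_inner (fun F => sum F fun i _ => h i) h₀ hT
    (fun v w => by simpa only [LinearMap.sum_apply] using! hs v w) y z
  simpa only [sum_apply, inner_sum] using! tendsto_sum

lemma commute {U : E →L[𝕜] E} {u : V →ₗ[𝕜] V} {u' : V → V} (h : RepresentsForm e s T)
    (hU : ∀ v, U (e v) = e (u v)) (hU' : ∀ v, U.adjoint (e v) = e (u' v))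
    (hs : ∀ v w, s (u' v) w = s v (u w)) : Commute U T := by
  have hPU : Commute (closedRangeProjection e) U := commute_closedRangeProjection hU hU'
  have represents_left : RepresentsForm e (s.compl₂ u) (U * T) :=
    { inner_apply v w := by
        rw [mul_apply_eq_comp, ← U.adjoint_inner_left, hU', h.inner_apply, hs]
        rfl
      compression := by
        rw [← mul_assoc, hPU.eq, mul_assoc, mul_assoc, ← mul_assoc _ T, h.compression] }
  have represents_right : RepresentsForm e (s.compl₂ u) (T * U) :=
    { inner_apply v w := by
        rw [mul_apply_eq_comp, hU, h.inner_apply]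
        rfl
      compression := by
        rw [mul_assoc, mul_assoc, ← hPU.eq, ← mul_assoc, ← mul_assoc, h.compression] }
  exact represents_left.unique represents_right

lemma adjoint_comp_self {G : Type*} [NormedAddCommGroup G] [InnerProductSpace 𝕜 G]
    [CompleteSpace G] {g : V →ₗ[𝕜] G} (hg : ∀ v w, ⟪g v, g w⟫_𝕜 = s v w) {W : E →L[𝕜] G}
    (hW : ∀ v, W (e v) = g v) (hWP : W ∘L closedRangeProjection e = W) :
    RepresentsForm e s (W.adjoint ∘L W) where
  inner_apply v w := by
    rw [ContinuousLinearMap.comp_apply, ContinuousLinearMap.adjoint_inner_right, hW, hW, hg]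
  compression := by
    have hPW : closedRangeProjection e ∘L W.adjoint = W.adjoint := by
      conv_rhs => rw [← hWP, ContinuousLinearMap.adjoint_comp,
        (isSelfAdjoint_starProjection _).adjoint_eq]
    exact congr($hPW ∘L $hWP)

end RepresentsForm

lemma exists_contraction_comp_eq {G : Type*} [NormedAddCommGroup G] [NormedSpace 𝕜 G]
    [CompleteSpace G] {g : V →ₗ[𝕜] G} (hg : ∀ v, ‖g v‖ ≤ ‖e v‖) :
    ∃ W : E →L[𝕜] G, ‖W‖ ≤ 1 ∧ (∀ v, W (e v) = g v) ∧ W ∘L closedRangeProjection e = W := by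
  set K := (LinearMap.range e).topologicalClosure
  let e' : V →ₗ[𝕜] K :=
    e.codRestrict K fun v => Submodule.le_topologicalClosure _ (LinearMap.mem_range_self e v)
  have he' : DenseRange e' := fun y => by
    rw [closure_subtype, ← Set.range_comp]
    exact y.2
  have hg' (v : V) : ‖g v‖ ≤ 1 * ‖e' v‖ := by simpa using! hg v
  refine ⟨g.extendOfNorm e' ∘L K.orthogonalProjectionOnto, ?_, fun v => ?_, ?_⟩
  · exact (ContinuousLinearMap.opNorm_comp_le _ _).trans <| mul_le_one₀
      (LinearMap.opNorm_extendOfNorm_le he' zero_le_one hg') (norm_nonneg _)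
      K.orthogonalProjectionOnto_norm_le
  · rw [← LinearMap.extendOfNorm_eq he' ⟨1, hg'⟩ v]
    exact congrArg (g.extendOfNorm e')
      (Submodule.orthogonalProjectionOnto_mem_subspace_eq_self (e' v))
  · ext y
    exact congrArg (g.extendOfNorm e') (Submodule.orthogonalProjectionOnto_mem_subspace_eq_self _)

theorem exists_representsForm {s : V →ₗ⋆[𝕜] V →ₗ[𝕜] 𝕜} (hs : s.IsPosSemidef)
    (hle : ∀ v, s v v ≤ ⟪e v, e v⟫_𝕜) :
    ∃ T : E →L[𝕜] E, 0 ≤ T ∧ ‖T‖ ≤ 1 ∧ RepresentsForm e s T := by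
  obtain ⟨G, _, _, _, g, hg⟩ := exists_inner_eq_of_isPosSemidef hs
  have hg_le (v : V) : ‖g v‖ ≤ ‖e v‖ := by
    refine le_of_sq_le_sq ?_ (norm_nonneg _)
    rw [← inner_self_eq_norm_sq (𝕜 := 𝕜), ← inner_self_eq_norm_sq (𝕜 := 𝕜), hg]
    exact RCLike.re_monotone (hle v)
  obtain ⟨W, hW_norm, hW, hWP⟩ := exists_contraction_comp_eq hg_le
  refine ⟨W.adjoint ∘L W, ?_, ?_, .adjoint_comp_self hg hW hWP⟩
  · exact (ContinuousLinearMap.nonneg_iff_isPositive _).2 W.isPositive_adjoint_comp_self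
  · rw [ContinuousLinearMap.norm_adjoint_comp_self]
    exact mul_le_one₀ hW_norm (norm_nonneg _) hW_norm

end RepresentsForm

section CyclicVector

variable {A : Type*} [Ring A] [StarRing A] [Algebra ℂ A]

/-- The map `a ↦ π a x`, whose range is dense in the cyclic subspace generated by the vector `x`
under the representation `π`. -/
def orbitMap (π : A →⋆ₐ[ℂ] (H →L[ℂ] H)) (x : H) : A →ₗ[ℂ] H :=
  (ContinuousLinearMap.apply ℂ H x).toLinearMap ∘ₗ π.toAlgHom.toLinearMap

@[simp]
lemma orbitMap_apply (π : A →⋆ₐ[ℂ] (H →L[ℂ] H)) (x : H) (a : A) : orbitMap π x a = π a x := rfl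

variable [StarModule ℂ A]

/-- The sesquilinear form `(a, b) ↦ φ (a⋆ b)` of the Gelfand–Naimark–Segal construction. -/
def gnsForm (φ : A →ₗ[ℂ] ℂ) : A →ₗ⋆[ℂ] A →ₗ[ℂ] ℂ :=
  LinearMap.mk₂'ₛₗ (starRingEnd ℂ) (RingHom.id ℂ) (fun a b => φ (star a * b))
    (by simp [add_mul]) (by simp) (by simp [mul_add]) (by simp)

@[simp]
lemma gnsForm_apply (φ : A →ₗ[ℂ] ℂ) (a b : A) : gnsForm φ a b = φ (star a * b) := rfl

variable {π : A →⋆ₐ[ℂ] (H →L[ℂ] H)} {x : H} {φ : A →ₗ[ℂ] ℂ} {T : H →L[ℂ] H}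

lemma RepresentsForm.commute_representation (h : RepresentsForm (orbitMap π x) (gnsForm φ) T)
    (a : A) : Commute (π a) T :=
  h.commute (u := LinearMap.mulLeft ℂ a) (u' := (star a * ·)) (fun b => by simp)
    (fun b => by simp [← ContinuousLinearMap.star_eq_adjoint, ← map_star])
    fun b c => by simp [mul_assoc]

lemma RepresentsForm.inner_cyclicVector (h : RepresentsForm (orbitMap π x) (gnsForm φ) T) (a : A) :
    ⟪x, T (π a x)⟫_ℂ = φ a := by
  simpa using h.inner_apply 1 a

theorem exists_representsForm_gnsForm (hφ : ∀ a, 0 ≤ φ (star a * a))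
    (hle : ∀ a, φ (star a * a) ≤ ⟪x, π (star a * a) x⟫_ℂ) :
    ∃ T : H →L[ℂ] H, 0 ≤ T ∧ ‖T‖ ≤ 1 ∧ RepresentsForm (orbitMap π x) (gnsForm φ) T := by
  refine exists_representsForm (isPosSemidef_of_isNonneg ⟨hφ⟩) fun a => ?_
  have inner_orbit : ⟪π a x, π a x⟫_ℂ = ⟪x, π (star a * a) x⟫_ℂ := by
    rw [map_mul, map_star, ContinuousLinearMap.star_eq_adjoint, mul_apply_eq_comp,
      ContinuousLinearMap.adjoint_inner_right]
  exact (hle a).trans_eq inner_orbit.symm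

end CyclicVector

section EffectValuedMeasure

variable {Ω : Type*} [MeasurableSpace Ω]

/-- A positive operator valued measure `T` on `Ω` whose values are effects, i.e. operators between
`0` and `1`. Countable additivity is understood in the weak operator topology, and `T univ = 1` is
not required. -/
structure IsEffectValuedMeasure (T : Set Ω → H →L[ℂ] H) : Prop where
  nonneg : ∀ S, MeasurableSet S → 0 ≤ T S
  le_one : ∀ S, MeasurableSet S → T S ≤ 1
  hasSum_inner : ∀ f : ℕ → Set Ω, (∀ n, MeasurableSet (f n)) →
    Pairwise (Function.onFun Disjoint f) →
    ∀ y z : H, HasSum (fun n => ⟪y, T (f n) z⟫_ℂ) ⟪y, T (⋃ n, f n) z⟫_ℂ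

/-- The functional `a ↦ ∫ t, ω t a ∂μ`, the barycenter of the family `ω` with respect to `μ`. -/
def barycenter {A : Type*} [AddCommGroup A] [Module ℂ A] (μ : Measure Ω) (ω : Ω → A →ₗ[ℂ] ℂ)
    (hω : ∀ a, Integrable (fun t => ω t a) μ) : A →ₗ[ℂ] ℂ where
  toFun a := ∫ t, ω t a ∂μ
  map_add' a b := by simp only [map_add, integral_add (hω a) (hω b)]
  map_smul' c a := by simp only [map_smul, integral_smul, RingHom.id_apply]

variable {A : Type*} [Ring A] [StarRing A] [Algebra ℂ A] [StarModule ℂ A]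
  {π : A →⋆ₐ[ℂ] (H →L[ℂ] H)} {x : H} {μ : Measure Ω} {ω : Ω → A →ₗ[ℂ] ℂ}

lemma isEffectValuedMeasure_of_representsForm {T : Set Ω → H →L[ℂ] H}
    (hω : ∀ a, Integrable (fun t => ω t a) μ) (hT : ∀ S, 0 ≤ T S) (hT_norm : ∀ S, ‖T S‖ ≤ 1)
    (h : ∀ S, RepresentsForm (orbitMap π x)
      (gnsForm (barycenter (μ.restrict S) ω fun a => (hω a).restrict)) (T S)) :
    IsEffectValuedMeasure T where
  nonneg S _ := hT S
  le_one S _ := (CStarAlgebra.norm_le_one_iff_of_nonneg _ (hT S)).1 (hT_norm S)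
  hasSum_inner f hf hdisj := by
    have sum_eq (F : Finset ℕ) : ∑ n ∈ F, T (f n) = T (⋃ n ∈ F, f n) := by
      refine (RepresentsForm.sum F fun n _ => h (f n)).unique ?_
      convert h (⋃ n ∈ F, f n) using 1
      ext a b
      rw [LinearMap.sum_apply, LinearMap.sum_apply]
      exact (integral_biUnion_finset F (fun n _ => hf n) (hdisj.set_pairwise _)
        fun n _ => (hω _).integrableOn).symm
    refine RepresentsForm.hasSum_inner (C := 1) (fun n => h (f n)) (h _)
      (fun F => sum_eq F ▸ hT_norm _) fun a b => ?_
    exact hasSum_integral_iUnion hf hdisj (hω _).integrableOn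

theorem exists_isEffectValuedMeasure_of_barycenter (hpos : ∀ t a, 0 ≤ ω t (star a * a))
    (hω : ∀ a, Integrable (fun t => ω t a) μ) (hbary : ∀ a, ⟪x, π a x⟫_ℂ = ∫ t, ω t a ∂μ) :
    ∃ T : Set Ω → H →L[ℂ] H, IsEffectValuedMeasure T ∧ (∀ S a, Commute (π a) (T S)) ∧
      ∀ S a, ⟪x, T S (π a x)⟫_ℂ = ∫ t in S, ω t a ∂μ := by
  choose T hT hT_norm h using fun S =>
    exists_representsForm_gnsForm (π := π) (x := x)
      (φ := barycenter (μ.restrict S) ω fun a => (hω a).restrict)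
      (fun a => integral_nonneg fun t => hpos t a)
      (fun a => (hbary _).symm ▸ setIntegral_le_integral (hω _) (.of_forall fun t => hpos t a))
  exact ⟨T, isEffectValuedMeasure_of_representsForm hω hT hT_norm h,
    fun S => (h S).commute_representation, fun S => (h S).inner_cyclicVector⟩

end EffectValuedMeasure

section CompletelyPositive

variable {Φ : (H →L[ℂ] H) → (H →L[ℂ] H)} {T : H →L[ℂ] H}

namespace IsCompletelyPositiveMap

lemma comp {H : Type*} [NormedAddCommGroup H] [InnerProductSpace ℂ H]
    {Φ Ψ : (H →L[ℂ] H) → (H →L[ℂ] H)} (hΨ : IsCompletelyPositiveMap Ψ)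
    (hΦ : IsCompletelyPositiveMap Φ) : IsCompletelyPositiveMap (Ψ ∘ Φ) where
  left := ((hΨ.1.mk' Ψ).comp (hΦ.1.mk' Φ)).isLinear
  right n M hM := by simpa only [Matrix.map_map] using hΨ.2 n _ (hΦ.2 n M hM)

lemma conj (V : H →L[ℂ] H) : IsCompletelyPositiveMap fun A => V * A * star V where
  left := ⟨fun A A' => by rw [mul_add, add_mul], fun c A => by simp⟩
  right n M hM v := by
    refine (hM fun i => star V (v i)).trans_eq ?_
    simp only [Matrix.map_apply, mul_apply_eq_comp, ContinuousLinearMap.star_eq_adjoint,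
      ContinuousLinearMap.adjoint_inner_left]

lemma mul_left (hT : 0 ≤ T) (hΦ : IsCompletelyPositiveMap Φ) (hcomm : ∀ A, Commute T (Φ A)) :
    IsCompletelyPositiveMap fun A => T * Φ A := by
  have mul_eq_conj (A : H →L[ℂ] H) : T * Φ A = CFC.sqrt T * Φ A * star (CFC.sqrt T) := by
    have sqrt_comm : Commute (CFC.sqrt T) (Φ A) := Commute.cfcₙ_nnreal (hcomm A) _
    rw [(CFC.sqrt_nonneg T).isSelfAdjoint.star_eq, mul_assoc, ← sqrt_comm.eq, ← mul_assoc,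
      CFC.sqrt_mul_sqrt_self T hT]
  simp only [mul_eq_conj]
  exact (conj _).comp hΦ

lemma integral {G : Type*} [MeasurableSpace G] {ν : Measure G}
    {Φ : G → (H →L[ℂ] H) → (H →L[ℂ] H)} (hΦ : ∀ g, IsCompletelyPositiveMap (Φ g))
    (hint : ∀ A, Integrable (fun g => Φ g A) ν) :
    IsCompletelyPositiveMap fun A => ∫ g, Φ g A ∂ν where
  left :=
    { map_add A A' := by simp only [(hΦ _).1.map_add, integral_add (hint A) (hint A')]
      map_smul c A := by simp only [(hΦ _).1.map_smul, integral_smul] }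
  right n M hM v := by
    let entry (i j : Fin n) : (H →L[ℂ] H) →L[ℂ] ℂ :=
      innerSL ℂ (v i) ∘L ContinuousLinearMap.apply ℂ H (v j)
    have hentry (i j : Fin n) : Integrable (fun g => entry i j (Φ g (M i j))) ν :=
      (entry i j).integrable_comp (hint _)
    calc 0 ≤ ∫ g, ∑ i, ∑ j, entry i j (Φ g (M i j)) ∂ν :=
          integral_nonneg fun g => (hΦ g).2 n M hM v
      _ = ∑ i, ∑ j, ∫ g, entry i j (Φ g (M i j)) ∂ν := by
          rw [integral_finsetSum _ fun i _ => integrable_finsetSum _ fun j _ => hentry i j]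
          exact Finset.sum_congr rfl fun i _ => integral_finsetSum _ fun j _ => hentry i j
      _ = ∑ i, ∑ j, entry i j (∫ g, Φ g (M i j) ∂ν) := by
          simp only [(entry _ _).integral_comp_comm (hint _)]

end IsCompletelyPositiveMap

end CompletelyPositive

section Twirl

variable {G 𝒜 : Type*} [Group G] [TopologicalSpace G] [MeasurableSpace G] [CStarAlgebra 𝒜]

/-- The twirl of `A`, that is the average of its conjugates under a unitary representation `U`. -/
def twirl (U : G →ₜ* unitary 𝒜) (ν : Measure G) (A : 𝒜) : 𝒜 :=
  ∫ g, (U g : 𝒜) * A * star (U g : 𝒜) ∂ν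

variable {U : G →ₜ* unitary 𝒜} {ν : Measure G}

lemma twirl_eq_self [IsProbabilityMeasure ν] {C : 𝒜} (hC : ∀ g, Commute (U g : 𝒜) C) :
    twirl U ν C = C := by
  have conj_eq (g : G) : (U g : 𝒜) * C * star (U g : 𝒜) = C := by
    rw [(hC g).eq, mul_assoc, Unitary.mul_star_self_of_mem (U g).2, mul_one]
  simp [twirl, conj_eq]

variable [CompactSpace G] [BorelSpace G] [IsFiniteMeasureOnCompacts ν]

lemma integrable_conj (A : 𝒜) : Integrable (fun g => (U g : 𝒜) * A * star (U g : 𝒜)) ν := by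
  have hU : Continuous fun g => (U g : 𝒜) := continuous_subtype_val.comp U.continuous_toFun
  exact ((hU.mul continuous_const).mul hU.star).integrable_of_hasCompactSupport
    (.of_compactSpace _)

lemma conj_twirl [MeasurableMul G] [ν.IsMulLeftInvariant] (A : 𝒜) (g : G) :
    (U g : 𝒜) * twirl U ν A * star (U g : 𝒜) = twirl U ν A :=
  calc (U g : 𝒜) * twirl U ν A * star (U g : 𝒜)
      = ∫ h, (U g : 𝒜) * ((U h : 𝒜) * A * star (U h : 𝒜)) * star (U g : 𝒜) ∂ν := by
        rw [twirl, ← integral_const_mul_of_integrable (integrable_conj A),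
          ← integral_mul_const_of_integrable ((integrable_conj A).const_mul _)]
    _ = ∫ h, (U (g * h) : 𝒜) * A * star (U (g * h) : 𝒜) ∂ν := by
        simp only [map_mul, Submonoid.coe_mul, star_mul, mul_assoc]
    _ = twirl U ν A := integral_mul_left_eq_self (fun h => (U h : 𝒜) * A * star (U h : 𝒜)) g

lemma commute_twirl [MeasurableMul G] [ν.IsMulLeftInvariant] (A : 𝒜) (g : G) :
    Commute (U g : 𝒜) (twirl U ν A) := by
  rw [commute_iff_eq]
  conv_rhs => rw [← conj_twirl A g, mul_assoc, Unitary.star_mul_self_of_mem (U g).2, mul_one]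

lemma isCompletelyPositiveMap_twirl {U : G →ₜ* unitary (H →L[ℂ] H)} :
    IsCompletelyPositiveMap (twirl U ν) :=
  .integral (fun g => .conj (U g : H →L[ℂ] H)) integrable_conj

end Twirl

section ConditionalExpectation

/-- `E` is a conditional expectation of `B(H)` onto the set of operators `S`: a completely positive
map with values in `S` that fixes every element of `S`. -/
structure IsConditionalExpectation (S : Set (H →L[ℂ] H)) (E : (H →L[ℂ] H) → (H →L[ℂ] H)) :
    Prop where
  completelyPositive : IsCompletelyPositiveMap E
  mem : ∀ A, E A ∈ S
  eq_self : ∀ A ∈ S, E A = A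

lemma compactSpace_unitary {R : Type*} [NormedRing R] [StarRing R] [CStarRing R] [ProperSpace R] :
    CompactSpace (unitary R) := by
  refine isCompact_iff_compactSpace.1 (Metric.isCompact_of_isClosed_isBounded isClosed_unitary
    (isBounded_iff_forall_norm_le.2 ⟨‖(1 : R)‖, fun u hu => ?_⟩))
  simpa using (CStarRing.norm_coe_unitary_mul ⟨u, hu⟩ (1 : R)).le

lemma mem_centralizer_of_commute_unitary {𝒜 : Type*} [CStarAlgebra 𝒜] {M : StarSubalgebra ℂ 𝒜}
    (hM : IsClosed (M : Set 𝒜)) {A : 𝒜} (hA : ∀ u : unitary M, Commute ((u : M) : 𝒜) A) :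
    A ∈ Set.centralizer (M : Set 𝒜) := by
  let : CStarAlgebra M := StarSubalgebra.cstarAlgebra M (h_closed := hM)
  have commute_of_mem_span (m : M) (hm : m ∈ Submodule.span ℂ (unitary M : Set M)) :
      Commute (m : 𝒜) A := by
    induction hm using Submodule.span_induction with
    | mem u hu => exact hA ⟨u, hu⟩
    | zero => exact .zero_left A
    | add a b _ _ ha hb => exact ha.add_left hb
    | smul c a _ ha => exact ha.smul_left c
  refine fun m hm => commute_of_mem_span ⟨m, hm⟩ ?_
  rw [CStarAlgebra.span_unitary]
  trivial

/-- The unitary group of a ⋆-subalgebra `M`, as a group of unitaries of the ambient algebra. -/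
def unitaryInclusion {𝒜 : Type*} [CStarAlgebra 𝒜] (M : StarSubalgebra ℂ 𝒜) :
    unitary M →ₜ* unitary 𝒜 where
  toFun u := ⟨(u : M), Unitary.map_mem M.subtype u.2⟩
  map_one' := rfl
  map_mul' _ _ := rfl
  continuous_toFun := by fun_prop

theorem exists_isConditionalExpectation_centralizer (M : StarSubalgebra ℂ (H →L[ℂ] H))
    [FiniteDimensional ℂ M] :
    ∃ E, IsConditionalExpectation (Set.centralizer (M : Set (H →L[ℂ] H))) E := by
  have hclosed : IsClosed (M : Set (H →L[ℂ] H)) :=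
    Submodule.closed_of_finiteDimensional (Subalgebra.toSubmodule M.toSubalgebra)
  have : ProperSpace M := FiniteDimensional.proper ℂ M
  have : CompactSpace (unitary M) := compactSpace_unitary
  let : MeasurableSpace (unitary M) := borel _
  have : BorelSpace (unitary M) := ⟨rfl⟩
  let haar : Measure (unitary M) := Measure.haarMeasure ⊤
  have : IsProbabilityMeasure haar :=
    ⟨Measure.haarMeasure_self (K₀ := (⊤ : TopologicalSpace.PositiveCompacts (unitary M)))⟩
  exact ⟨twirl (unitaryInclusion M) haar, isCompletelyPositiveMap_twirl,
    fun A => mem_centralizer_of_commute_unitary hclosed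
      (commute_twirl (U := unitaryInclusion M) (ν := haar) A),
    fun A hA => twirl_eq_self fun u => hA (u : M) (u : M).2⟩

end ConditionalExpectation

section Instrument

variable {Ω : Type*} [MeasurableSpace Ω] {T : Set Ω → H →L[ℂ] H} {E : (H →L[ℂ] H) → (H →L[ℂ] H)}
  {B : StarSubalgebra ℂ (H →L[ℂ] H)}

lemma IsEffectValuedMeasure.isCPInstrument_mul (hT : IsEffectValuedMeasure T)
    (hE : IsCompletelyPositiveMap E) (hE_one : E 1 = 1) (hcomm : ∀ S A, Commute (T S) (E A)) :
    IsCPInstrument fun S A => T S * E A :=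
  ⟨fun A f hf hdisj y z => hT.hasSum_inner f hf hdisj y (E A z), fun S hS =>
    ⟨hE.mul_left (hT.nonneg S hS) (hcomm S), by simpa only [hE_one, mul_one] using hT.le_one S hS⟩⟩

theorem exists_isConditionalExpectation_centralizer_centralizer
    (hfin : FiniteDimensional ℂ (Subalgebra.centralizer ℂ (B : Set (H →L[ℂ] H)))) :
    ∃ E, IsConditionalExpectation (Set.centralizer (Set.centralizer (B : Set (H →L[ℂ] H)))) E := by
  have hsub : (StarSubalgebra.centralizer ℂ (B : Set (H →L[ℂ] H))).toSubalgebra =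
      Subalgebra.centralizer ℂ (B : Set (H →L[ℂ] H)) := by
    rw [StarSubalgebra.centralizer_toSubalgebra, StarMemClass.star_coe_eq, Set.union_self]
  have : FiniteDimensional ℂ (StarSubalgebra.centralizer ℂ (B : Set (H →L[ℂ] H))) := by
    rw [← hsub] at hfin
    exact hfin
  have := exists_isConditionalExpectation_centralizer
    (StarSubalgebra.centralizer ℂ (B : Set (H →L[ℂ] H)))
  rwa [← StarSubalgebra.coe_toSubalgebra, hsub] at this

theorem generalized_HJW_finiteDimensional_general (B : StarSubalgebra ℂ (H →L[ℂ] H)) (x : H)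
    (μ : Measure Ω) (ω : Ω → B →ₗ[ℂ] ℂ)
    (hpos : ∀ t b, 0 ≤ ω t (star b * b)) (hint : ∀ b, Integrable (fun t => ω t b) μ)
    (hbary : ∀ b : B, ⟪x, (b : H →L[ℂ] H) x⟫_ℂ = ∫ t, ω t b ∂μ)
    (hfin : FiniteDimensional ℂ (Subalgebra.centralizer ℂ (B : Set (H →L[ℂ] H)))) :
    ∃ ℰ : Set Ω → (H →L[ℂ] H) → (H →L[ℂ] H),
      IsCPInstrument ℰ ∧
      InstrumentLocalTo ℰ (Set.centralizer (B : Set (H →L[ℂ] H))) ∧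
      ∀ S : Set Ω, MeasurableSet S → ∀ b : B,
        ⟪x, ℰ S (b : H →L[ℂ] H) x⟫_ℂ = ∫ t in S, ω t b ∂μ := by
  obtain ⟨T, hT, T_comm, inner_T⟩ :=
    exists_isEffectValuedMeasure_of_barycenter (π := B.subtype) hpos hint hbary
  obtain ⟨E, hE⟩ := exists_isConditionalExpectation_centralizer_centralizer hfin
  have E_one : E 1 = 1 := hE.eq_self 1 Set.one_mem_centralizer
  have E_eq_self (b : B) : E b = b := hE.eq_self b (Set.subset_centralizer_centralizer b.2)
  have T_mem (S : Set Ω) : T S ∈ Set.centralizer (B : Set (H →L[ℂ] H)) :=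
    fun b hb => T_comm S ⟨b, hb⟩
  refine ⟨fun S A => T S * E A,
    hT.isCPInstrument_mul hE.completelyPositive E_one fun S A => hE.mem A _ (T_mem S),
    fun S _ C hC => ?_, fun S _ b => ?_⟩
  · simp only [E_one, mul_one, hE.eq_self C hC]
  · simpa [E_eq_self] using inner_T S b

end Instrument

section StateSpace

variable {B : StarSubalgebra ℂ (H →L[ℂ] H)} {φ : WeakDual ℂ B}

lemma IsStateOn.map_star_mul_self_nonneg (hφ : IsStateOn B φ) (b : B) : 0 ≤ φ (star b * b) :=
  hφ.1 _ (star_mul_self_nonneg (b : H →L[ℂ] H))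

lemma IsStateOn.norm_apply_le (hφ : IsStateOn B φ) (b : B) : ‖φ b‖ ≤ ‖b‖ := by
  have sub_star_mul_self_nonneg :
      (0 : H →L[ℂ] H) ≤ (((‖b‖ ^ 2 : ℝ) : ℂ) • (1 : B) - star b * b : B) := by
    have := CStarAlgebra.star_mul_le_algebraMap_norm_sq (a := (b : H →L[ℂ] H))
    rw [Algebra.algebraMap_eq_smul_one, ← Complex.coe_smul] at this
    simpa [-Complex.ofReal_pow] using this
  have apply_star_mul_self_le : (φ (star b * b)).re ≤ ‖b‖ ^ 2 := by
    have := (Complex.nonneg_iff.1 (hφ.1 _ sub_star_mul_self_nonneg)).1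
    rw [map_sub, map_smul, hφ.2] at this
    simpa [-Complex.ofReal_pow] using this
  have cauchy_schwarz : ‖φ b‖ ^ 2 ≤ (φ (star b * b)).re := by
    have : ‖φ (star 1 * b)‖ ^ 2 ≤ (φ (star 1 * 1)).re * (φ (star b * b)).re :=
      norm_apply_sq_le_of_isPosSemidef
        (isPosSemidef_of_isNonneg (s := gnsForm φ.toLinearMap) ⟨hφ.map_star_mul_self_nonneg⟩) 1 b
    simpa [hφ.2] using this
  exact le_of_sq_le_sq (cauchy_schwarz.trans apply_star_mul_self_le) (norm_nonneg b)

lemma integrable_stateSpace_apply (μ : Measure (StateSpace B)) [IsFiniteMeasure μ] (b : B) :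
    Integrable (fun ω : StateSpace B => ω.1 b) μ :=
  have apply_continuous : Continuous fun ω : StateSpace B => ω.1 b :=
    (WeakDual.eval_continuous b).comp continuous_subtype_val
  .of_bound apply_continuous.measurable.aestronglyMeasurable ‖b‖
    (.of_forall fun ω => ω.2.norm_apply_le b)

end StateSpace

/-- **Generalized HJW theorem (finite case, Theorem 3).**  Let `B` be a unital
C*-subalgebra of `B(H)`, `x` a unit vector, and `μ` a regular Borel probability measure on
the state space of `B` with barycenter `ω_x|_B`.  If the commutant `B'` is
finite-dimensional, then there is a CP instrument `ℰ` on `B(H)` local to `B'` with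
`⟨x, ℰ[S](B) x⟩ = ∫_S ω(B) dμ(ω)` for all Borel `S` and all `B ∈ B`. -/
theorem generalized_HJW_finiteDimensional
    (B : StarSubalgebra ℂ (H →L[ℂ] H)) (hBclosed : IsClosed (B : Set (H →L[ℂ] H)))
    (x : H) (hx : ‖x‖ = 1)
    (μ : Measure (StateSpace B)) [IsProbabilityMeasure μ] (hreg : μ.Regular)
    (hbary : ∀ b : B, ⟪x, (b : H →L[ℂ] H) x⟫_ℂ = ∫ ω : StateSpace B, ω.1 b ∂μ)
    (hfin : FiniteDimensional ℂ (Subalgebra.centralizer ℂ (B : Set (H →L[ℂ] H)))) :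
    ∃ ℰ : Set (StateSpace B) → (H →L[ℂ] H) → (H →L[ℂ] H),
      IsCPInstrument ℰ ∧
      InstrumentLocalTo ℰ (Set.centralizer (B : Set (H →L[ℂ] H))) ∧
      ∀ S : Set (StateSpace B), MeasurableSet S → ∀ b : B,
        ⟪x, ℰ S (b : H →L[ℂ] H) x⟫_ℂ = ∫ ω in S, ω.1 b ∂μ :=
  generalized_HJW_finiteDimensional_general B x μ (fun ω => ω.1.toLinearMap)
    (fun ω => ω.2.map_star_mul_self_nonneg) (integrable_stateSpace_apply μ) hbary hfin

end
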